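/- Let d ≥ 4 and let X be a finite set of n points in Euclidean d-space with all pairwise distances at most 1. Suppose that any two d-element subsets of X, each with all pairwise distances within it equal to 1, share at least d − 3 common points. Then the number of d-element subsets of X with all pairwise distances equal to 1 is at most n. -/

import Mathlib

attribute [local instance] Classical.propDecidable

/-!
Call two points adjacent when their distance is `1`, and let `g(p, x) = 1 - |p - x|²`. For an
affine relation `z` (`∑ z_p = 0` and `∑ z_p p = 0`) the sum `∑ z_p g(p, x)` does not depend on `x`.

Suppose two `d`-cliques share exactly `d - 3 ≥ 1` points. Their `d + 3` points carry two
dimensions of affine relations, and these see the cliques only through the `3 × 3` matrix `M` of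
the gaps between the points outside the intersection. One relation vanishes on the intersection and
is a singular pair of `M` with singular value `1`; as the entries of `M` lie in `[0, 1)`, counting
signs shows that the pair has one sign. By the Schur test `2 xᵀMy ≤ |x|² + |y|²` for all `x`, `y`,
and then a relation whose weights on one side add up to `0` must vanish: a contradiction. So any
two `d`-cliques share at least `d - 2` points.

If a clique on `d` or `d + 1` points contains all but at most one point of every `d`-clique, then
each further `d`-clique is determined by its outside point, and there are at most `n` of them.
Otherwise all `d`-cliques contain a common `(d - 2)`-set, and they correspond to the edges of a
graph. As in the Hopf–Pannwitz argument in the plane, among any three neighbours of a vertex one is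
a leaf, so this graph has at most as many edges as vertices.
-/

open Finset Matrix

theorem card_pos_le_one_or_card_neg_le_one {α : Type*} {s : Finset α} (hs : #s ≤ 3) (f : α → ℝ) :
    #{a ∈ s | 0 < f a} ≤ 1 ∨ #{a ∈ s | f a < 0} ≤ 1 := by
  have hdisj : Disjoint {a ∈ s | 0 < f a} {a ∈ s | f a < 0} :=
    disjoint_filter.2 fun _ _ hpos hneg => lt_asymm hpos hneg
  have hcard := card_le_card
    (union_subset (filter_subset (0 < f ·) s) (filter_subset (f · < 0) s))
  rw [card_union_of_disjoint hdisj] at hcard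
  omega

theorem exists_forall_ne_nonpos {α : Type*} {s : Finset α} {f : α → ℝ} (hs : s.Nonempty)
    (hcard : #{a ∈ s | 0 < f a} ≤ 1) : ∃ a ∈ s, ∀ b ∈ s, b ≠ a → f b ≤ 0 := by
  obtain ⟨a, ha, hmax⟩ := exists_max_image s f hs
  refine ⟨a, ha, fun b hb hba => not_lt.1 fun hpos => hba ?_⟩
  exact card_le_one.1 hcard b (mem_filter.2 ⟨hb, hpos⟩) a
    (mem_filter.2 ⟨ha, hpos.trans_le (hmax b hb)⟩)

section SingularPairs

variable {ι κ : Type*} [Fintype ι] [Fintype κ] {M : Matrix ι κ ℝ} {x u : ι → ℝ} {y v : κ → ℝ}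

theorem sum_posPart_mulVec_lt (hM : ∀ i j, 0 ≤ M i j) (hM' : ∀ i j, M i j < 1)
    (hcard : #{i | 0 < (M *ᵥ y) i} ≤ 1) (hy : ∃ j, 0 < y j) :
    ∑ i, ((M *ᵥ y) i)⁺ < ∑ j, (y j)⁺ := by
  obtain ⟨j₀, hj₀⟩ := hy
  have hentry (i : ι) : (M *ᵥ y) i < ∑ j, (y j)⁺ :=
    sum_lt_sum
      (fun j _ => (mul_le_mul_of_nonneg_left (le_posPart _) (hM i j)).trans
        (mul_le_of_le_one_left (posPart_nonneg _) (hM' i j).le))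
      ⟨j₀, mem_univ _, by
        rw [posPart_of_nonneg hj₀.le]
        exact mul_lt_of_lt_one_left hj₀ (hM' i j₀)⟩
  by_cases hx : ∃ i, 0 < (M *ᵥ y) i
  · obtain ⟨i₀, hi₀⟩ := hx
    have hunique (i : ι) (hi : i ≠ i₀) : ((M *ᵥ y) i)⁺ = 0 := by
      refine posPart_of_nonpos (not_lt.1 fun hpos => hi ?_)
      exact card_le_one.1 hcard i (by simpa using hpos) i₀ (by simpa using hi₀)
    rw [sum_eq_single i₀ (fun i _ => hunique i) (by simp), posPart_of_nonneg hi₀.le]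
    exact hentry i₀
  · push Not at hx
    rw [sum_eq_zero fun i _ => posPart_of_nonpos (hx i)]
    exact sum_pos' (fun j _ => posPart_nonneg _) ⟨j₀, mem_univ _, posPart_pos hj₀⟩

theorem sum_posPart_mulVec_lt_of_sum_eq (hM : ∀ i j, 0 ≤ M i j) (hM' : ∀ i j, M i j < 1)
    (hι : Fintype.card ι ≤ 3) (hsum : ∑ i, (M *ᵥ y) i = ∑ j, y j)
    (hpos : ∃ j, 0 < y j) (hneg : ∃ j, y j < 0) :
    ∑ i, ((M *ᵥ y) i)⁺ < ∑ j, (y j)⁺ := by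
  obtain hcard | hcard := card_pos_le_one_or_card_neg_le_one (s := univ) hι (M *ᵥ y)
  · exact sum_posPart_mulVec_lt hM hM' hcard hpos
  · have hlt := sum_posPart_mulVec_lt (y := -y) hM hM' (by simpa [mulVec_neg] using hcard)
      (by simpa using hneg)
    simp only [mulVec_neg, Pi.neg_apply, posPart_neg] at hlt
    have hx : ∑ i, ((M *ᵥ y) i)⁺ - ∑ i, ((M *ᵥ y) i)⁻ = ∑ i, (M *ᵥ y) i := by
      simp only [← sum_sub_distrib, posPart_sub_negPart]
    have hy : ∑ j, (y j)⁺ - ∑ j, (y j)⁻ = ∑ j, y j := by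
      simp only [← sum_sub_distrib, posPart_sub_negPart]
    linarith

omit [Fintype ι] in
theorem mulVec_nonneg (hM : ∀ i j, 0 ≤ M i j) (hy : 0 ≤ y) : 0 ≤ M *ᵥ y :=
  fun i => dotProduct_nonneg_of_nonneg (hM i) hy

theorem nonneg_or_nonpos_of_mulVec_eq (hM : ∀ i j, 0 ≤ M i j) (hM' : ∀ i j, M i j < 1)
    (hι : Fintype.card ι ≤ 3) (hκ : Fintype.card κ ≤ 3)
    (hx : M *ᵥ y = x) (hy : Mᵀ *ᵥ x = y) (hsum : ∑ i, x i = ∑ j, y j) :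
    (0 ≤ x ∧ 0 ≤ y) ∨ (x ≤ 0 ∧ y ≤ 0) := by
  have hMt (j : κ) (i : ι) : 0 ≤ Mᵀ j i := hM i j
  have hnonneg : 0 ≤ x ↔ 0 ≤ y :=
    ⟨fun h => hy ▸ mulVec_nonneg hMt h, fun h => hx ▸ mulVec_nonneg hM h⟩
  have hnonpos : x ≤ 0 ↔ y ≤ 0 := by
    refine ⟨fun h => ?_, fun h => ?_⟩
    · simpa [mulVec_neg, hy] using mulVec_nonneg hMt (neg_nonneg.2 h)
    · simpa [mulVec_neg, hx] using mulVec_nonneg hM (neg_nonneg.2 h)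
  by_contra! hmixed
  have hx_neg : ¬ 0 ≤ x := fun h => hmixed.1 h (hnonneg.1 h)
  have hx_pos : ¬ x ≤ 0 := fun h => hmixed.2 h (hnonpos.1 h)
  have hy_neg := hnonneg.not.1 hx_neg
  have hy_pos := hnonpos.not.1 hx_pos
  simp only [Pi.le_def, Pi.zero_apply, not_forall, not_le] at hx_neg hx_pos hy_neg hy_pos
  have hlt := sum_posPart_mulVec_lt_of_sum_eq hM hM' hι (by rwa [hx]) hy_pos hy_neg
  have hgt := sum_posPart_mulVec_lt_of_sum_eq hMt (fun j i => hM' i j) hκ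
    (by rw [hy, hsum]) hx_pos hx_neg
  rw [hx] at hlt
  rw [hy] at hgt
  exact lt_asymm hlt hgt

-- The Schur test, by AM–GM in each entry:
-- `2 * x i * y j ≤ x i ^ 2 * v j / u i + y j ^ 2 * u i / v j`.
theorem two_mul_dotProduct_mulVec_le (hM : ∀ i j, 0 ≤ M i j) (hu : ∀ i, 0 < u i)
    (hv : ∀ j, 0 < v j) (hMv : M *ᵥ v ≤ u) (hMu : Mᵀ *ᵥ u ≤ v) (x : ι → ℝ) (y : κ → ℝ) :
    2 * (x ⬝ᵥ M *ᵥ y) ≤ x ⬝ᵥ x + y ⬝ᵥ y := by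
  have entry (i : ι) (j : κ) :
      2 * (x i * (M i j * y j)) ≤
        x i ^ 2 / u i * (M i j * v j) + y j ^ 2 / v j * (M i j * u i) := by
    have hui := hu i
    have hvj := hv j
    have hsq : x i ^ 2 / u i * (M i j * v j) + y j ^ 2 / v j * (M i j * u i)
        - 2 * (x i * (M i j * y j)) = M i j * (x i * v j - y j * u i) ^ 2 / (u i * v j) := by
      field_simp
      ring
    have := hM i j
    have : 0 ≤ M i j * (x i * v j - y j * u i) ^ 2 / (u i * v j) := by positivity
    linarith
  calc 2 * (x ⬝ᵥ M *ᵥ y) = ∑ i, ∑ j, 2 * (x i * (M i j * y j)) := by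
        simp only [dotProduct, mulVec, mul_sum]
    _ ≤ ∑ i, ∑ j, (x i ^ 2 / u i * (M i j * v j) + y j ^ 2 / v j * (M i j * u i)) :=
        sum_le_sum fun i _ => sum_le_sum fun j _ => entry i j
    _ = ∑ i, x i ^ 2 / u i * (M *ᵥ v) i + ∑ j, y j ^ 2 / v j * (Mᵀ *ᵥ u) j := by
        simp only [sum_add_distrib, mulVec, dotProduct, mul_sum, transpose_apply]
        rw [sum_comm (s := univ (α := ι)) (f := fun i j => y j ^ 2 / v j * (M i j * u i))]
    _ ≤ ∑ i, x i ^ 2 / u i * u i + ∑ j, y j ^ 2 / v j * v j := by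
        gcongr with i _ j _
        · exact div_nonneg (sq_nonneg _) (hu i).le
        · exact hMv i
        · exact div_nonneg (sq_nonneg _) (hv j).le
        · exact hMu j
    _ = x ⬝ᵥ x + y ⬝ᵥ y := by
        simp only [dotProduct, div_mul_cancel₀ _ (hu _).ne', div_mul_cancel₀ _ (hv _).ne', sq]

theorem card_mulVec_eq_zero_le_one (hM : ∀ i j, 0 ≤ M i j) (hM' : ∀ i j, M i j < 1)
    (hι : Fintype.card ι ≤ 3) (hsum : ∑ i, (M *ᵥ y) i = ∑ j, y j)
    (hy : 0 ≤ y) (hpos : ∃ j, 0 < y j) : #{i | (M *ᵥ y) i = 0} ≤ 1 := by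
  have hx : 0 ≤ M *ᵥ y := mulVec_nonneg hM hy
  have htwo : 1 < #{i | 0 < (M *ᵥ y) i} := by
    by_contra! hcard
    have hlt := sum_posPart_mulVec_lt hM hM' hcard hpos
    simp only [posPart_of_nonneg (hx _), posPart_of_nonneg (hy _)] at hlt
    exact hlt.ne hsum
  have hcompl := card_filter_add_card_filter_not (s := univ) (fun i => 0 < (M *ᵥ y) i)
  have hzero (i : ι) : ¬ 0 < (M *ᵥ y) i ↔ (M *ᵥ y) i = 0 := by
    rw [not_lt]
    exact ⟨fun h => le_antisymm h (hx i), fun h => h.le⟩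
  simp only [hzero, card_univ] at hcompl
  omega

theorem mulVec_add_indicator_le (hM : ∀ i j, 0 ≤ M i j) (hM' : ∀ i j, M i j ≤ 1)
    (hx : M *ᵥ y = x) (hy : Mᵀ *ᵥ x = y) (hx₀ : 0 ≤ x) (hcard : #{j | y j = 0} ≤ 1) :
    M *ᵥ (y + {j | y j = 0}.indicator 1) ≤ x + {i | x i = 0}.indicator 1 := by
  rw [mulVec_add, hx]
  refine add_le_add_right (fun i => ?_) x
  have hsum : (M *ᵥ {j | y j = 0}.indicator 1) i = ∑ j with y j = 0, M i j := by
    simp [mulVec, dotProduct, Set.indicator_apply, sum_filter]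
  rw [hsum]
  by_cases hi : x i = 0
  · calc ∑ j with y j = 0, M i j ≤ #{j | y j = 0} • (1 : ℝ) :=
          sum_le_card_nsmul _ _ _ fun j _ => hM' i j
      _ ≤ {i | x i = 0}.indicator 1 i := by simpa [hi] using hcard
  · refine (sum_eq_zero fun j hj => ?_).trans_le (by simp [hi])
    have hterms : ∑ i, M i j * x i = 0 := by
      simpa [← hy, mulVec, dotProduct] using hj
    have hterm := (sum_eq_zero_iff_of_nonneg fun i _ => mul_nonneg (hM i j) (hx₀ i)).1 hterms i
      (mem_univ i)
    exact (mul_eq_zero.1 hterm).resolve_right hi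

omit [Fintype ι] in
theorem add_indicator_pos (hx : 0 ≤ x) (i : ι) :
    0 < (x + {i | x i = 0}.indicator 1 : ι → ℝ) i := by
  by_cases hi : x i = 0
  · simp [hi]
  · simpa [hi] using (hx i).lt_of_ne' hi

theorem two_mul_dotProduct_mulVec_le_of_mulVec_eq (hM : ∀ i j, 0 ≤ M i j)
    (hM' : ∀ i j, M i j < 1) (hι : Fintype.card ι ≤ 3) (hκ : Fintype.card κ ≤ 3)
    (hu : M *ᵥ v = u) (hv : Mᵀ *ᵥ u = v) (hsum : ∑ i, u i = ∑ j, v j) (hu₀ : u ≠ 0)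
    (x : ι → ℝ) (y : κ → ℝ) : 2 * (x ⬝ᵥ M *ᵥ y) ≤ x ⬝ᵥ x + y ⬝ᵥ y := by
  wlog hnonneg : 0 ≤ u ∧ 0 ≤ v generalizing u v
  · obtain hsign | ⟨hu', hv'⟩ := nonneg_or_nonpos_of_mulVec_eq hM hM' hι hκ hu hv hsum
    · exact absurd hsign hnonneg
    · exact this (u := -u) (v := -v) (by simp [mulVec_neg, hu]) (by simp [mulVec_neg, hv])
        (by simp [hsum]) (neg_ne_zero.2 hu₀) ⟨neg_nonneg.2 hu', neg_nonneg.2 hv'⟩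
  obtain ⟨hu', hv'⟩ := hnonneg
  have hMt (j : κ) (i : ι) : 0 ≤ Mᵀ j i := hM i j
  have hv₀ : v ≠ 0 := by rintro rfl; exact hu₀ (by simp [← hu])
  have hu_card : #{i | u i = 0} ≤ 1 := by
    simpa only [hu] using card_mulVec_eq_zero_le_one hM hM' hι (by rw [hu, hsum]) hv'
      ((Pi.lt_def.1 (hv'.lt_of_ne' hv₀)).2)
  have hv_card : #{j | v j = 0} ≤ 1 := by
    simpa only [hv] using card_mulVec_eq_zero_le_one hMt (fun j i => hM' i j) hκ
      (by rw [hv, hsum]) hu' ((Pi.lt_def.1 (hu'.lt_of_ne' hu₀)).2)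
  exact two_mul_dotProduct_mulVec_le hM (add_indicator_pos hu') (add_indicator_pos hv')
    (mulVec_add_indicator_le hM (fun i j => (hM' i j).le) hu hv hu' hv_card)
    (mulVec_add_indicator_le hMt (fun j i => (hM' i j).le) hv hu hv' hu_card) x y

-- `x` and `y` satisfy `x ⬝ᵥ x + y ⬝ᵥ y = 2 * (x ⬝ᵥ M *ᵥ y) - k * r ^ 2`, which forces `r = 0`.
theorem eq_zero_of_perturbed_mulVec_eq (hM : ∀ i j, 0 ≤ M i j) (hM' : ∀ i j, M i j < 1)
    (hι : Fintype.card ι ≤ 3) (hκ : Fintype.card κ ≤ 3)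
    (hu : M *ᵥ v = u) (hv : Mᵀ *ᵥ u = v) (huv : ∑ i, u i = ∑ j, v j) (hu₀ : u ≠ 0)
    {r k : ℝ} (hk : 0 < k) (hx : ∀ i, x i = (M *ᵥ y) i + r) (hy : ∀ j, y j = (Mᵀ *ᵥ x) j - r)
    (hxy : ∑ j, y j = ∑ i, x i + k * r) (hx₀ : ∑ i, x i = 0) : x = 0 ∧ y = 0 := by
  have hxx : x ⬝ᵥ x = x ⬝ᵥ M *ᵥ y := by
    calc x ⬝ᵥ x = ∑ i, x i * ((M *ᵥ y) i + r) := sum_congr rfl fun i _ => by rw [← hx]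
      _ = x ⬝ᵥ M *ᵥ y + (∑ i, x i) * r := by simp [mul_add, sum_add_distrib, sum_mul, dotProduct]
      _ = x ⬝ᵥ M *ᵥ y := by rw [hx₀, zero_mul, add_zero]
  have hyy : y ⬝ᵥ y = x ⬝ᵥ M *ᵥ y - k * r ^ 2 := by
    calc y ⬝ᵥ y = ∑ j, y j * ((Mᵀ *ᵥ x) j - r) := sum_congr rfl fun j _ => by rw [← hy]
      _ = y ⬝ᵥ Mᵀ *ᵥ x - (∑ j, y j) * r := by
        simp [mul_sub, sum_sub_distrib, sum_mul, dotProduct]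
      _ = x ⬝ᵥ M *ᵥ y - k * r ^ 2 := by
        rw [hxy, hx₀, mulVec_transpose, dotProduct_comm, ← dotProduct_mulVec]
        ring
  have hquad := two_mul_dotProduct_mulVec_le_of_mulVec_eq hM hM' hι hκ hu hv huv hu₀ x y
  have hr : r = 0 := by
    have : r ^ 2 ≤ 0 := by nlinarith
    exact pow_eq_zero_iff two_ne_zero |>.1 (this.antisymm (sq_nonneg r))
  subst hr
  have hy₀ : ∑ j, y j = 0 := by rw [hxy, hx₀, mul_zero, add_zero]
  have hx' : M *ᵥ y = x := funext fun i => by rw [hx, add_zero]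
  have hy' : Mᵀ *ᵥ x = y := funext fun j => by rw [hy, sub_zero]
  obtain ⟨hx_sign, hy_sign⟩ | ⟨hx_sign, hy_sign⟩ :=
    nonneg_or_nonpos_of_mulVec_eq hM hM' hι hκ hx' hy' (hx₀.trans hy₀.symm)
  · exact ⟨(Fintype.sum_eq_zero_iff_of_nonneg hx_sign).1 hx₀,
      (Fintype.sum_eq_zero_iff_of_nonneg hy_sign).1 hy₀⟩
  · exact ⟨(Fintype.sum_eq_zero_iff_of_nonpos hx_sign).1 hx₀,
      (Fintype.sum_eq_zero_iff_of_nonpos hy_sign).1 hy₀⟩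

end SingularPairs

section AffineRelations

variable {E : Type*} [NormedAddCommGroup E] [InnerProductSpace ℝ E]

/-- The unit distance graph of `E`: its edges join the points at distance `1`. -/
def unitDistGraph (E : Type*) [NormedAddCommGroup E] : SimpleGraph E where
  Adj x y := ‖x - y‖ = 1
  symm := ⟨fun x y h => by rwa [norm_sub_rev]⟩
  loopless := ⟨fun x h => by simp at h⟩

/-- The amount `1 - ‖x - y‖ ^ 2` by which the squared distance of two points falls short of `1`. -/
def unitGap (x y : E) : ℝ := 1 - ‖x - y‖ ^ 2

/-- An affine relation among the points of `s`: weights of total `0` whose weighted sum of the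
points is `0`. The values of `z` outside `s` are irrelevant. -/
structure IsAffineRelation (s : Finset E) (z : E → ℝ) : Prop where
  sum_eq_zero : ∑ p ∈ s, z p = 0
  sum_smul_eq_zero : ∑ p ∈ s, z p • p = 0

variable {C W s : Finset E} {z : E → ℝ} {x y : E}

omit [InnerProductSpace ℝ E] in
theorem unitGap_self (x : E) : unitGap x x = 1 := by simp [unitGap]

omit [InnerProductSpace ℝ E] in
theorem unitGap_comm (x y : E) : unitGap x y = unitGap y x := by
  rw [unitGap, unitGap, norm_sub_rev]

omit [InnerProductSpace ℝ E] in
theorem unitGap_of_adj (h : (unitDistGraph E).Adj x y) : unitGap x y = 0 := by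
  rw [unitGap, show ‖x - y‖ = 1 from h]
  norm_num

omit [InnerProductSpace ℝ E] in
theorem unitGap_nonneg (h : ‖x - y‖ ≤ 1) : 0 ≤ unitGap x y :=
  sub_nonneg.2 (pow_le_one₀ (norm_nonneg _) h)

omit [InnerProductSpace ℝ E] in
theorem unitGap_lt_one (h : x ≠ y) : unitGap x y < 1 := by
  have := norm_sub_pos_iff.2 h
  rw [unitGap]
  linarith [sq_pos_of_pos this]

theorem exists_isAffineRelation [FiniteDimensional ℝ E] (h : Module.finrank ℝ E + 1 < #s) :
    ∃ z, IsAffineRelation s z ∧ ∃ p ∈ s, z p ≠ 0 := by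
  obtain ⟨z, hsmul, hsum, hne⟩ :=
    Module.exists_nontrivial_relation_sum_zero_of_finrank_succ_lt_card h
  exact ⟨z, ⟨hsum, hsmul⟩, hne⟩

-- Affine relations among the lifted points `(p, φ p)` of `E × ℝ`.
theorem exists_isAffineRelation_sum_mul_eq_zero [FiniteDimensional ℝ E]
    (h : Module.finrank ℝ E + 2 < #s) (φ : E → ℝ) :
    ∃ z, IsAffineRelation s z ∧ ∑ p ∈ s, z p * φ p = 0 ∧ ∃ p ∈ s, z p ≠ 0 := by
  have lift_injOn : Set.InjOn (fun p => (p, φ p)) s := fun p _ q _ h => congrArg Prod.fst h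
  obtain ⟨z, hsmul, hsum, hne⟩ :=
    Module.exists_nontrivial_relation_sum_zero_of_finrank_succ_lt_card
      (R := ℝ) (t := s.image fun p => (p, φ p)) (by
        rw [Module.finrank_prod, Module.finrank_self, card_image_of_injOn lift_injOn]
        omega)
  rw [sum_image lift_injOn] at hsmul hsum
  refine ⟨fun p => z (p, φ p), ⟨hsum, ?_⟩, ?_, by simpa using hne⟩
  · simpa [Prod.fst_sum] using congrArg Prod.fst hsmul
  · simpa [Prod.snd_sum] using congrArg Prod.snd hsmul

theorem IsAffineRelation.exists_sum_mul_unitGap_eq (hz : IsAffineRelation s z) :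
    ∃ r, ∀ x, ∑ p ∈ s, z p * unitGap p x = r := by
  refine ⟨-∑ p ∈ s, z p * ‖p‖ ^ 2, fun x => ?_⟩
  have expand (p : E) : z p * unitGap p x =
      z p * (1 - ‖x‖ ^ 2) - z p * ‖p‖ ^ 2 + 2 * inner ℝ (z p • p) x := by
    rw [unitGap, norm_sub_sq_real, real_inner_smul_left]
    ring
  simp only [expand, sum_add_distrib, sum_sub_distrib, ← sum_mul, ← mul_sum, ← sum_inner,
    hz.sum_eq_zero, hz.sum_smul_eq_zero, inner_zero_left]
  ring

theorem disjoint_of_forall_adj {V : Type*} {G : SimpleGraph V} {s t : Finset V}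
    (h : ∀ a ∈ s, ∀ b ∈ t, G.Adj a b) : Disjoint s t :=
  disjoint_left.2 fun a has hat => G.irrefl (h a has a hat)

theorem IsAffineRelation.exists_clique_level (hz : IsAffineRelation (C ∪ W) z)
    (hC : (unitDistGraph E).IsClique C) (hCW : ∀ q ∈ C, ∀ w ∈ W, (unitDistGraph E).Adj q w) :
    ∃ r, (∀ q ∈ C, z q = r) ∧
      (∀ x, r * ∑ q ∈ C, unitGap q x + ∑ w ∈ W, z w * unitGap w x = r) ∧
      #C * r + ∑ w ∈ W, z w = 0 := by
  obtain ⟨r, hr⟩ := hz.exists_sum_mul_unitGap_eq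
  have hdisj : Disjoint C W := disjoint_of_forall_adj hCW
  have hlevel (q : E) (hq : q ∈ C) : z q = r := by
    rw [← hr q, sum_eq_single_of_mem q (mem_union_left W hq), unitGap_self, mul_one]
    intro p hp hpq
    have hadj : (unitDistGraph E).Adj p q :=
      (mem_union.1 hp).elim (fun h => hC h hq hpq) fun h => (hCW q hq p h).symm
    rw [unitGap_of_adj hadj, mul_zero]
  refine ⟨r, hlevel, fun x => ?_, ?_⟩
  · have heval := hr x
    rwa [sum_union hdisj, sum_congr rfl fun q hq => by rw [hlevel q hq], ← mul_sum] at heval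
  · rw [← hz.sum_eq_zero, sum_union hdisj, sum_congr rfl hlevel, sum_const, nsmul_eq_mul]

theorem eq_of_forall_adj_clique [FiniteDimensional ℝ E] {v v' : E}
    (hC : (unitDistGraph E).IsClique C) (hcard : Module.finrank ℝ E ≤ #C)
    (hv : ∀ q ∈ C, (unitDistGraph E).Adj q v) (hv' : ∀ q ∈ C, (unitDistGraph E).Adj q v')
    (hdist : ‖v - v'‖ ≤ 1) : v = v' := by
  by_contra hne
  have hCW : ∀ q ∈ C, ∀ w ∈ ({v, v'} : Finset E), (unitDistGraph E).Adj q w := by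
    simpa using fun q hq => ⟨hv q hq, hv' q hq⟩
  obtain ⟨z, hz, hz₀⟩ := exists_isAffineRelation (s := C ∪ {v, v'})
    (by rw [card_union_of_disjoint (disjoint_of_forall_adj hCW), card_pair hne]; omega)
  obtain ⟨r, hlevel, heval, hsum⟩ := hz.exists_clique_level hC hCW
  have at_v := heval v
  have at_v' := heval v'
  rw [sum_eq_zero fun q hq => unitGap_of_adj (hv q hq), sum_pair hne, unitGap_self,
    unitGap_comm v' v] at at_v
  rw [sum_eq_zero fun q hq => unitGap_of_adj (hv' q hq), sum_pair hne, unitGap_self] at at_v'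
  rw [sum_pair hne] at hsum
  have hgap₀ : 0 ≤ unitGap v v' := unitGap_nonneg hdist
  have hgap₁ : unitGap v v' < 1 := unitGap_lt_one hne
  have heq : z v = z v' := by
    have : (1 - unitGap v v') * (z v - z v') = 0 := by linarith
    exact sub_eq_zero.1 ((mul_eq_zero.1 this).resolve_left (by linarith))
  rw [← heq] at hsum at_v
  have hzv : z v = 0 := by
    have : z v * (2 + #C * (1 + unitGap v v')) = 0 := by
      linear_combination hsum + (#C : ℝ) * at_v
    exact (mul_eq_zero.1 this).resolve_right (by positivity)
  have hr : r = 0 := by rw [← at_v, hzv]; ring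
  obtain ⟨p, hp, hp₀⟩ := hz₀
  rcases mem_union.1 hp with hpC | hpW
  · exact hp₀ ((hlevel p hpC).trans hr)
  · obtain rfl | rfl : p = v ∨ p = v' := by simpa using hpW
    exacts [hp₀ hzv, hp₀ (heq ▸ hzv)]

theorem IsAffineRelation.neg (hz : IsAffineRelation s z) : IsAffineRelation s (-z) :=
  ⟨by simp [hz.sum_eq_zero], by simp [hz.sum_smul_eq_zero]⟩

theorem IsAffineRelation.exists_clique_level_pos (hz : IsAffineRelation (C ∪ W) z)
    (hz₀ : ∃ p ∈ C ∪ W, z p ≠ 0) (hC : (unitDistGraph E).IsClique C)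
    (hCW : ∀ q ∈ C, ∀ w ∈ W, (unitDistGraph E).Adj q w) {w₀ : E} (hw₀ : w₀ ∈ W)
    (hnonpos : ∀ w ∈ W, w ≠ w₀ → z w ≤ 0) :
    ∃ r > 0, ∀ x, r * ∑ q ∈ C, unitGap q x + ∑ w ∈ W, z w * unitGap w x = r := by
  obtain ⟨r, hlevel, heval, hsum⟩ := hz.exists_clique_level hC hCW
  have hterm (w : E) (hw : w ∈ W) : z w * ‖w - w₀‖ ^ 2 ≤ 0 := by
    obtain rfl | hne := eq_or_ne w w₀
    · simp
    · exact mul_nonpos_of_nonpos_of_nonneg (hnonpos w hw hne) (sq_nonneg _)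
  have hsq : ∑ w ∈ W, z w * ‖w - w₀‖ ^ 2 = -((#C + 1) * r) := by
    have at_w₀ := heval w₀
    rw [Finset.sum_eq_zero fun q hq => unitGap_of_adj (hCW q hq w₀ hw₀)] at at_w₀
    simp only [unitGap, mul_sub, mul_one, sum_sub_distrib] at at_w₀
    linarith
  have hr : 0 ≤ r := by
    have := hsq ▸ sum_nonpos hterm
    exact nonneg_of_mul_nonneg_right (a := (#C + 1 : ℝ)) (by linarith) (by positivity)
  refine ⟨r, hr.lt_of_ne' ?_, heval⟩
  rintro rfl
  rw [mul_zero, neg_zero, sum_eq_zero_iff_of_nonpos hterm] at hsq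
  have hz_ne (w : E) (hw : w ∈ W) (hne : w ≠ w₀) : z w = 0 :=
    (mul_eq_zero.1 (hsq w hw)).resolve_right (pow_ne_zero 2 (norm_sub_pos_iff.2 hne).ne')
  rw [mul_zero, zero_add, sum_eq_single_of_mem w₀ hw₀ hz_ne] at hsum
  obtain ⟨p, hp, hp₀⟩ := hz₀
  obtain rfl | hne := eq_or_ne p w₀
  · exact hp₀ hsum
  · exact hp₀ ((mem_union.1 hp).elim (hlevel p) fun hpW => hz_ne p hpW hne)

theorem IsAffineRelation.eq_of_forall_adj (hz : IsAffineRelation (C ∪ W) z)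
    (hz₀ : ∃ p ∈ C ∪ W, z p ≠ 0) (hC : (unitDistGraph E).IsClique C)
    (hCW : ∀ q ∈ C, ∀ w ∈ W, (unitDistGraph E).Adj q w) {w₀ : E} (hw₀ : w₀ ∈ W)
    (hnonpos : ∀ w ∈ W, w ≠ w₀ → z w ≤ 0) {u v : E} (hv : v ∈ C)
    (hu : ∀ q ∈ C.erase v, (unitDistGraph E).Adj q u) (hw₀u : (unitDistGraph E).Adj w₀ u)
    (hdist : ∀ w ∈ W, ‖w - u‖ ≤ 1) : u = v := by
  obtain ⟨r, hr, heval⟩ := hz.exists_clique_level_pos hz₀ hC hCW hw₀ hnonpos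
  have hgap : ∑ w ∈ W, z w * unitGap w u ≤ 0 := by
    refine sum_nonpos fun w hw => ?_
    obtain rfl | hne := eq_or_ne w w₀
    · rw [unitGap_of_adj hw₀u, mul_zero]
    · exact mul_nonpos_of_nonpos_of_nonneg (hnonpos w hw hne) (unitGap_nonneg (hdist w hw))
  have hvu : r * ‖v - u‖ ^ 2 ≤ 0 := by
    have at_u := heval u
    rw [← add_sum_erase _ _ hv, Finset.sum_eq_zero fun q hq => unitGap_of_adj (hu q hq),
      unitGap] at at_u
    linarith
  have hzero : ‖v - u‖ ^ 2 = 0 :=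
    le_antisymm (nonpos_of_mul_nonpos_right hvu hr) (sq_nonneg _)
  exact (sub_eq_zero.1 (norm_eq_zero.1 (pow_eq_zero_iff two_ne_zero |>.1 hzero))).symm

theorem exists_forall_eq_of_forall_adj [FiniteDimensional ℝ E] {v : E}
    (hC : (unitDistGraph E).IsClique C) (hv : v ∈ C)
    (hCW : ∀ q ∈ C, ∀ w ∈ W, (unitDistGraph E).Adj q w) (hW : W.Nonempty) (hW₃ : #W ≤ 3)
    (hcard : Module.finrank ℝ E + 1 < #C + #W) :
    ∃ w ∈ W, ∀ u, (∀ q ∈ C.erase v, (unitDistGraph E).Adj q u) → (unitDistGraph E).Adj w u →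
      (∀ w' ∈ W, ‖w' - u‖ ≤ 1) → u = v := by
  obtain ⟨z, hz, hz₀⟩ := exists_isAffineRelation (s := C ∪ W)
    (by rwa [card_union_of_disjoint (disjoint_of_forall_adj hCW)])
  wlog hcard_pos : #{w ∈ W | 0 < z w} ≤ 1 generalizing z
  · have hcard_neg := (card_pos_le_one_or_card_neg_le_one hW₃ z).resolve_left hcard_pos
    exact this (-z) hz.neg (by simpa using hz₀) (by simpa using hcard_neg)
  obtain ⟨w₀, hw₀, hnonpos⟩ := exists_forall_ne_nonpos hW hcard_pos
  exact ⟨w₀, hw₀, fun u hu hw₀u hdist =>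
    hz.eq_of_forall_adj hz₀ hC hCW hw₀ hnonpos hv hu hw₀u hdist⟩

end AffineRelations

section TwoCliques

variable {E : Type*} [NormedAddCommGroup E] [InnerProductSpace ℝ E] {K L : Finset E} {z : E → ℝ}

/-- The matrix of the gaps between the points of `A` and those of `B`. -/
def gapMatrix (A B : Finset E) : Matrix A B ℝ := Matrix.of fun a b => unitGap (a : E) b

omit [InnerProductSpace ℝ E] in
theorem gapMatrix_transpose (A B : Finset E) : (gapMatrix A B)ᵀ = gapMatrix B A :=
  Matrix.ext fun _ _ => unitGap_comm _ _

omit [InnerProductSpace ℝ E] in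
theorem gapMatrix_mulVec (A B : Finset E) (f : E → ℝ) (a : A) :
    (gapMatrix A B *ᵥ fun b => f b) a = ∑ b ∈ B, f b * unitGap b a := by
  rw [← Finset.sum_coe_sort B]
  exact sum_congr rfl fun b _ => by rw [mul_comm, unitGap_comm]; rfl

omit [InnerProductSpace ℝ E] in
theorem sum_mul_unitGap_of_isClique (hK : (unitDistGraph E).IsClique K) {p : E} (hp : p ∈ K)
    (f : E → ℝ) : ∑ q ∈ K, f q * unitGap q p = f p := by
  rw [sum_eq_single_of_mem p hp fun q hq hqp => by rw [unitGap_of_adj (hK hq hp hqp), mul_zero],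
    unitGap_self, mul_one]

theorem IsAffineRelation.exists_gapMatrix_mulVec_eq (hz : IsAffineRelation (K ∪ L) z)
    (hK : (unitDistGraph E).IsClique K) (hL : (unitDistGraph E).IsClique L) :
    ∃ r, (∀ q ∈ K ∩ L, z q = r) ∧
      (∀ a : ↥(K \ L), z a = (gapMatrix (K \ L) (L \ K) *ᵥ fun b => -z b) a + r) ∧
      (∀ b : ↥(L \ K), -z b = ((gapMatrix (K \ L) (L \ K))ᵀ *ᵥ fun a => z a) b - r) ∧
      ∑ b : ↥(L \ K), -z b = ∑ a : ↥(K \ L), z a + #(K ∩ L) * r := by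
  have hsplit : K ∪ L = K ∩ L ∪ (K \ L ∪ L \ K) := by grind
  have hadjK (q : E) (hq : q ∈ K ∩ L) (a : E) (ha : a ∈ K \ L) : (unitDistGraph E).Adj q a := by
    rw [mem_inter] at hq
    rw [mem_sdiff] at ha
    exact hK hq.1 ha.1 fun h => ha.2 (h ▸ hq.2)
  have hadjL (q : E) (hq : q ∈ K ∩ L) (b : E) (hb : b ∈ L \ K) : (unitDistGraph E).Adj q b := by
    rw [mem_inter] at hq
    rw [mem_sdiff] at hb
    exact hL hq.2 hb.1 fun h => hb.2 (h ▸ hq.1)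
  rw [hsplit] at hz
  obtain ⟨r, hlevel, heval, hsum⟩ := hz.exists_clique_level (hK.subset (by simp)) fun q hq w hw =>
    (mem_union.1 hw).elim (hadjK q hq w) (hadjL q hq w)
  simp only [sum_union (disjoint_sdiff_sdiff : Disjoint (K \ L) (L \ K))] at heval hsum
  refine ⟨r, hlevel, fun a => ?_, fun b => ?_, ?_⟩
  · have at_a := heval a
    rw [Finset.sum_eq_zero fun q hq => unitGap_of_adj (hadjK q hq a a.2),
      sum_mul_unitGap_of_isClique (hK.subset (by simp)) a.2] at at_a
    rw [gapMatrix_mulVec _ _ (-z ·)]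
    simp only [neg_mul, sum_neg_distrib]
    linarith
  · have at_b := heval b
    rw [Finset.sum_eq_zero fun q hq => unitGap_of_adj (hadjL q hq b b.2),
      sum_mul_unitGap_of_isClique (hL.subset (by simp)) b.2] at at_b
    rw [gapMatrix_transpose, gapMatrix_mulVec _ _ z]
    linarith
  · rw [Finset.sum_coe_sort (L \ K) (-z ·), Finset.sum_coe_sort (K \ L) z, sum_neg_distrib]
    linarith

theorem exists_gapMatrix_singularPair [FiniteDimensional ℝ E]
    (hK : (unitDistGraph E).IsClique K) (hL : (unitDistGraph E).IsClique L)
    (hne : (K ∩ L).Nonempty) (hcard : Module.finrank ℝ E + 2 < #(K ∪ L)) :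
    ∃ (u : ↥(K \ L) → ℝ) (v : ↥(L \ K) → ℝ), gapMatrix (K \ L) (L \ K) *ᵥ v = u ∧
      (gapMatrix (K \ L) (L \ K))ᵀ *ᵥ u = v ∧ ∑ a, u a = ∑ b, v b ∧ u ≠ 0 := by
  obtain ⟨q, hq⟩ := hne
  obtain ⟨z, hz, hzq, p, hp, hzp⟩ :=
    exists_isAffineRelation_sum_mul_eq_zero hcard fun p => if p = q then 1 else 0
  obtain ⟨r, hlevel, hx, hy, hxy⟩ := hz.exists_gapMatrix_mulVec_eq hK hL
  have hr : r = 0 := by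
    have hqK : q ∈ K ∪ L := mem_union_left L (mem_inter.1 hq).1
    simpa [hqK, hlevel q hq] using hzq
  subst hr
  have hu : (gapMatrix (K \ L) (L \ K) *ᵥ fun b => -z b) = fun a : ↥(K \ L) => z a :=
    funext fun a => by rw [hx, add_zero]
  have hv : (gapMatrix (K \ L) (L \ K))ᵀ *ᵥ (fun a => z a) = fun b : ↥(L \ K) => -z b :=
    funext fun b => by rw [hy, sub_zero]
  refine ⟨fun a => z a, fun b => -z b, hu, hv, by rw [hxy, mul_zero, add_zero], fun hu₀ => ?_⟩
  rw [hu₀, mulVec_zero] at hv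
  have hzA (a : E) (ha : a ∈ K \ L) : z a = 0 := congrFun hu₀ ⟨a, ha⟩
  have hzB (b : E) (hb : b ∈ L \ K) : z b = 0 := neg_eq_zero.1 (congrFun hv ⟨b, hb⟩).symm
  grind

theorem card_union_le_finrank_add_two [FiniteDimensional ℝ E]
    (hK : (unitDistGraph E).IsClique K) (hL : (unitDistGraph E).IsClique L)
    (hne : (K ∩ L).Nonempty) (hdist : ∀ a ∈ K, ∀ b ∈ L, ‖a - b‖ ≤ 1)
    (hKL : #(K \ L) ≤ 3) (hLK : #(L \ K) ≤ 3) : #(K ∪ L) ≤ Module.finrank ℝ E + 2 := by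
  by_contra! hcard
  obtain ⟨u, v, hu, hv, huv, hu₀⟩ := exists_gapMatrix_singularPair hK hL hne hcard
  obtain ⟨z, hz, hzK, p, hp, hzp⟩ :=
    exists_isAffineRelation_sum_mul_eq_zero hcard fun p => if p ∈ K \ L then 1 else 0
  obtain ⟨r, hlevel, hx, hy, hxy⟩ := hz.exists_gapMatrix_mulVec_eq hK hL
  have hx₀ : ∑ a : ↥(K \ L), z a = 0 := by
    rw [Finset.sum_coe_sort (K \ L) z, ← hzK]
    simp only [mul_ite, mul_one, mul_zero, sum_ite_mem,
      inter_eq_right.2 (sdiff_subset.trans subset_union_left)]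
  have hC : (0 : ℝ) < #(K ∩ L) := by exact_mod_cast hne.card_pos
  have hM (a : ↥(K \ L)) (b : ↥(L \ K)) : 0 ≤ gapMatrix (K \ L) (L \ K) a b :=
    unitGap_nonneg (hdist a (mem_sdiff.1 a.2).1 b (mem_sdiff.1 b.2).1)
  have hM' (a : ↥(K \ L)) (b : ↥(L \ K)) : gapMatrix (K \ L) (L \ K) a b < 1 :=
    unitGap_lt_one fun hab => (mem_sdiff.1 a.2).2 (hab ▸ (mem_sdiff.1 b.2).1)
  obtain ⟨hxA, hyB⟩ := eq_zero_of_perturbed_mulVec_eq hM hM' (by simpa using hKL)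
    (by simpa using hLK) hu hv huv hu₀ hC hx hy hxy hx₀
  have hr : r = 0 := by
    rw [hx₀, zero_add, Fintype.sum_eq_zero _ (congrFun hyB)] at hxy
    exact (mul_eq_zero.1 hxy.symm).resolve_left hC.ne'
  have hzA (a : E) (ha : a ∈ K \ L) : z a = 0 := congrFun hxA ⟨a, ha⟩
  have hzB (b : E) (hb : b ∈ L \ K) : z b = 0 := neg_eq_zero.1 (congrFun hyB ⟨b, hb⟩)
  grind

end TwoCliques

section Cliques

theorem card_edgeFinset_le_card {V : Type*} [Fintype V] (G : SimpleGraph V)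
    (h : ∀ v, #{w ∈ G.neighborFinset v | G.degree w ≠ 1} ≤ 2) :
    #G.edgeFinset ≤ Fintype.card V := by
  have hlocal (v : V) : G.degree v + (if G.degree v = 1 then 1 else 0) ≤
      2 + #{w ∈ G.neighborFinset v | G.degree w = 1} := by
    have hsplit := card_filter_add_card_filter_not (s := G.neighborFinset v) (G.degree · = 1)
    rw [G.card_neighborFinset_eq_degree] at hsplit
    have : #{w ∈ G.neighborFinset v | ¬ G.degree w = 1} ≤ 2 := h v
    split_ifs with hv <;> omega
  have hleaves : ∑ v, #{w ∈ G.neighborFinset v | G.degree w = 1} =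
      ∑ v, if G.degree v = 1 then 1 else 0 := by
    have hcount := sum_card_bipartiteAbove_eq_sum_card_bipartiteBelow
      (s := univ) (t := {w | G.degree w = 1}) G.Adj
    have habove (v : V) : ({w | G.degree w = 1} : Finset V).bipartiteAbove G.Adj v =
      {w ∈ G.neighborFinset v | G.degree w = 1} := by ext w; simp [bipartiteAbove, and_comm]
    have hbelow (w : V) : (univ : Finset V).bipartiteBelow G.Adj w = G.neighborFinset w := by
      ext v; simp [bipartiteBelow, G.adj_comm]
    simp only [habove, hbelow, G.card_neighborFinset_eq_degree] at hcount
    rw [hcount, sum_filter]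
    exact sum_congr rfl fun w _ => by split_ifs with hw <;> simp [hw]
  have hsum := sum_le_sum fun v (_ : v ∈ univ) => hlocal v
  rw [sum_add_distrib, sum_add_distrib, hleaves, G.sum_degrees_eq_twice_card_edges] at hsum
  simp only [sum_const, card_univ, smul_eq_mul] at hsum
  omega

variable {α : Type*} {G : SimpleGraph α} {X C K : Finset α} {d : ℕ}

/-- The cliques of `G` with `d` vertices, all in the finite set `X`. -/
noncomputable def cliquesIn (G : SimpleGraph α) (X : Finset α) (d : ℕ) : Finset (Finset α) :=
  {K ∈ X.powersetCard d | G.IsClique K}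

theorem mem_cliquesIn : K ∈ cliquesIn G X d ↔ K ⊆ X ∧ G.IsNClique d K := by
  rw [cliquesIn, mem_filter, mem_powersetCard, SimpleGraph.isNClique_iff]
  tauto

/-- The link of `C` in `X`: the points of `X` adjacent to all points of `C`. -/
noncomputable def link (G : SimpleGraph α) (X C : Finset α) : Finset α :=
  {x ∈ X | ∀ q ∈ C, G.Adj q x}

theorem mem_link {x : α} : x ∈ link G X C ↔ x ∈ X ∧ ∀ q ∈ C, G.Adj q x := mem_filter

theorem card_cliquesIn_le_card_edgeFinset_link (hC : #C + 2 = d)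
    (hsub : ∀ K ∈ cliquesIn G X d, C ⊆ K) :
    #(cliquesIn G X d) ≤ #(G.comap ((↑) : link G X C → α)).edgeFinset := by
  refine card_le_card_of_surjOn (fun e => C ∪ e.toFinset.map (.subtype _)) fun K hK => ?_
  have hCK := hsub K hK
  obtain ⟨hKX, hK⟩ := mem_cliquesIn.1 hK
  have hdiff : #(K \ C) = 2 := by
    have := card_sdiff_add_card_eq_card hCK
    have := hK.card_eq
    omega
  obtain ⟨a, b, hab, hdiff⟩ := card_eq_two.1 hdiff
  have hmem (p : α) (hp : p ∈ K \ C) : p ∈ link G X C := by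
    obtain ⟨hpK, hpC⟩ := mem_sdiff.1 hp
    exact mem_link.2 ⟨hKX hpK, fun q hq => hK.isClique (hCK hq) hpK fun h => hpC (h ▸ hq)⟩
  have ha : a ∈ K \ C := by simp [hdiff]
  have hb : b ∈ K \ C := by simp [hdiff]
  refine ⟨s(⟨a, hmem a ha⟩, ⟨b, hmem b hb⟩), ?_, ?_⟩
  · simpa using hK.isClique (mem_sdiff.1 ha).1 (mem_sdiff.1 hb).1 hab
  · simp [Sym2.toFinset_mk_eq, ← hdiff, hCK]

theorem card_neighborFinset_link_le_two {v : link G X C}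
    (hleaf : ∀ W ⊆ link G X C, #W = 3 → (∀ w ∈ W, G.Adj v w) →
      ∃ w ∈ W, ∀ u ∈ link G X C, G.Adj w u → u = v) :
    #{w ∈ (G.comap ((↑) : link G X C → α)).neighborFinset v |
      (G.comap ((↑) : link G X C → α)).degree w ≠ 1} ≤ 2 := by
  by_contra! hthree
  obtain ⟨W, hW, hW₃⟩ := exists_subset_card_eq (Nat.succ_le_of_lt hthree)
  have hWnbr (w : link G X C) (hw : w ∈ W) :
      G.Adj v w ∧ (G.comap ((↑) : link G X C → α)).degree w ≠ 1 := by simpa using hW hw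
  obtain ⟨w, hw, hunique⟩ := hleaf (W.map (.subtype _)) (map_subtype_subset W)
    (by rw [card_map, hW₃]) (by simpa using fun w hw hwW => (hWnbr ⟨w, hw⟩ hwW).1)
  obtain ⟨w, hwW, rfl⟩ := mem_map.1 hw
  refine (hWnbr w hwW).2 (SimpleGraph.degree_eq_one_iff_existsUnique_adj.2 ⟨v, ?_, ?_⟩)
  · exact (hWnbr w hwW).1.symm
  · exact fun u hu => Subtype.ext (hunique u u.2 hu)

theorem card_cliquesIn_le_of_forall_subset (hC : #C + 2 = d) (hsub : ∀ K ∈ cliquesIn G X d, C ⊆ K)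
    (hleaf : ∀ v ∈ link G X C, ∀ W ⊆ link G X C, #W = 3 → (∀ w ∈ W, G.Adj v w) →
      ∃ w ∈ W, ∀ u ∈ link G X C, G.Adj w u → u = v) :
    #(cliquesIn G X d) ≤ #X :=
  calc #(cliquesIn G X d) ≤ #(G.comap ((↑) : link G X C → α)).edgeFinset :=
        card_cliquesIn_le_card_edgeFinset_link hC hsub
    _ ≤ Fintype.card (link G X C) :=
        card_edgeFinset_le_card _ fun v => card_neighborFinset_link_le_two (hleaf v v.2)
    _ ≤ #X := by
        rw [Fintype.card_coe]
        exact card_le_card (filter_subset _ _)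

-- A clique leaving `S` through `v` has to use up all the neighbours of `v` in `S`.
theorem eq_insert_of_card_inter {S : Finset α} {v : α} (hK : G.IsNClique d K)
    (hKS : d ≤ #(K ∩ S) + 1) (hvK : v ∈ K) (hvS : v ∉ S) (hdeg : #{x ∈ S | G.Adj x v} < d) :
    K = insert v {x ∈ S | G.Adj x v} := by
  have hnbrs : K ∩ S ⊆ {x ∈ S | G.Adj x v} := fun x hx => by
    obtain ⟨hxK, hxS⟩ := mem_inter.1 hx
    exact mem_filter.2 ⟨hxS, hK.isClique hxK hvK fun h => hvS (h ▸ hxS)⟩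
  have hinter : K ∩ S = {x ∈ S | G.Adj x v} := eq_of_subset_of_card_le hnbrs (by omega)
  refine (eq_of_subset_of_card_le (insert_subset hvK (hinter ▸ inter_subset_left)) ?_).symm
  rw [card_insert_of_notMem (by simp [hvS]), ← hinter, hK.card_eq]
  exact hKS

theorem card_cliquesIn_le_of_base {S : Finset α} (hSX : S ⊆ X) (hchoose : (#S).choose d ≤ #S)
    (hdeg : ∀ v ∈ X, v ∉ S → #{x ∈ S | G.Adj x v} < d)
    (hbase : ∀ K ∈ cliquesIn G X d, d ≤ #(K ∩ S) + 1) : #(cliquesIn G X d) ≤ #X := by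
  have hinside : #{K ∈ cliquesIn G X d | K ⊆ S} ≤ #S := by
    refine (card_le_card fun K hK => ?_).trans ((card_powersetCard d S).trans_le hchoose)
    obtain ⟨hK, hKS⟩ := mem_filter.1 hK
    exact mem_powersetCard.2 ⟨hKS, (mem_cliquesIn.1 hK).2.card_eq⟩
  have houtside : #{K ∈ cliquesIn G X d | ¬ K ⊆ S} ≤ #(X \ S) := by
    refine card_le_card_of_forall_subsingleton (fun K v => v ∈ K) (fun K hK => ?_)
      fun v hv K hK K' hK' => ?_
    · obtain ⟨hK, hKS⟩ := mem_filter.1 hK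
      obtain ⟨v, hvK, hvS⟩ := not_subset.1 hKS
      exact ⟨v, mem_sdiff.2 ⟨(mem_cliquesIn.1 hK).1 hvK, hvS⟩, hvK⟩
    · obtain ⟨hvX, hvS⟩ := mem_sdiff.1 hv
      have hform {L : Finset α} (hL : L ∈ cliquesIn G X d) (hvL : v ∈ L) :=
        eq_insert_of_card_inter (mem_cliquesIn.1 hL).2 (hbase L hL) hvL hvS (hdeg v hvX hvS)
      exact (hform (mem_filter.1 hK.1).1 hK.2).trans (hform (mem_filter.1 hK'.1).1 hK'.2).symm
  calc #(cliquesIn G X d) =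
        #{K ∈ cliquesIn G X d | K ⊆ S} + #{K ∈ cliquesIn G X d | ¬ K ⊆ S} :=
        (card_filter_add_card_filter_not _).symm
    _ ≤ #S + #(X \ S) := add_le_add hinside houtside
    _ = #X := by rw [add_comm, card_sdiff_add_card_eq_card hSX]

theorem card_cliquesIn_le_of_base_clique (hK : K ∈ cliquesIn G X d) (hlink : link G X K = ∅)
    (hbase : ∀ L ∈ cliquesIn G X d, d ≤ #(L ∩ K) + 1) (hd : 0 < d) :
    #(cliquesIn G X d) ≤ #X := by
  obtain ⟨hKX, hK⟩ := mem_cliquesIn.1 hK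
  refine card_cliquesIn_le_of_base hKX ?_ (fun v hvX _ => ?_) hbase
  · rw [hK.card_eq, Nat.choose_self]
    exact hd
  · by_contra! hdeg
    have hall := filter_card_eq ((card_filter_le K _).antisymm (hK.card_eq.trans_le hdeg))
    exact notMem_empty v (hlink ▸ mem_link.2 ⟨hvX, hall⟩)

theorem card_cliquesIn_le_of_link_nonempty (hd : 3 ≤ d)
    (hinter : ∀ K ∈ cliquesIn G X d, ∀ L ∈ cliquesIn G X d, d ≤ #(K ∩ L) + 2)
    (hlink : ∀ K ∈ cliquesIn G X d, #(link G X K) ≤ 1) (hK : K ∈ cliquesIn G X d)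
    (hne : (link G X K).Nonempty) : #(cliquesIn G X d) ≤ #X := by
  obtain ⟨v, hv⟩ := hne
  obtain ⟨hvX, hvK⟩ := mem_link.1 hv
  obtain ⟨hKX, hKd⟩ := mem_cliquesIn.1 hK
  set S := insert v K
  have hSX : S ⊆ X := insert_subset hvX hKX
  have hSd : G.IsNClique (d + 1) S := hKd.insert fun q hq => (hvK q hq).symm
  have herase {t : α} (ht : t ∈ S) : S.erase t ∈ cliquesIn G X d :=
    mem_cliquesIn.2 ⟨(erase_subset t S).trans hSX, hSd.erase_of_mem ht⟩
  refine card_cliquesIn_le_of_base hSX ?_ (fun u huX huS => ?_) fun L hL => ?_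
  · rw [hSd.card_eq, Nat.choose_succ_self_right]
  · by_contra! hdeg
    obtain ⟨T, hT, hTd⟩ := exists_subset_card_eq hdeg
    obtain ⟨t, ht, rfl⟩ : ∃ t ∈ S, S.erase t = T := by
      obtain ⟨t, htT, htS⟩ := exists_eq_insert_iff.2
        ⟨hT.trans (filter_subset _ S), by rw [hTd, hSd.card_eq]⟩
      exact ⟨t, htS ▸ mem_insert_self t T, htS ▸ erase_insert htT⟩
    have hut : u = t := card_le_one.1 (hlink _ (herase ht)) u
      (mem_link.2 ⟨huX, fun q hq => (mem_filter.1 (hT hq)).2⟩) t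
      (mem_link.2 ⟨hSX ht, fun q hq =>
        hSd.isClique (mem_of_mem_erase hq) ht (ne_of_mem_erase hq)⟩)
    exact huS (hut ▸ ht)
  · obtain ⟨t, ht⟩ : (L ∩ K).Nonempty := card_pos.1 (by have := hinter L hL K hK; omega)
    obtain ⟨htL, htK⟩ := mem_inter.1 ht
    have htS : t ∈ S := mem_insert_of_mem htK
    have hcard := hinter L hL _ (herase htS)
    rw [inter_erase, card_erase_of_mem (mem_inter.2 ⟨htL, htS⟩)] at hcard
    omega

-- If `N` contains some `a ∈ A` and meets `K` in only `d - 2` points, it must contain the point of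
-- `M` outside `K`; that point is then adjacent to `a`, which puts `a` into the link of `M`.
theorem le_card_inter_of_three_swaps
    (hinter : ∀ K ∈ cliquesIn G X d, ∀ L ∈ cliquesIn G X d, d ≤ #(K ∩ L) + 2)
    (hlink : ∀ K ∈ cliquesIn G X d, link G X K = ∅) (hK : K ∈ cliquesIn G X d)
    {A : Finset α} (hAK : A ⊆ K) (hA : 3 ≤ #A)
    (hswap : ∀ a ∈ A, ∃ M ∈ cliquesIn G X d, K.erase a ⊆ M ∧ a ∉ M) :
    ∀ N ∈ cliquesIn G X d, d ≤ #(N ∩ K) + 1 := by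
  intro N hN
  by_contra! hsmall
  have hKd := (mem_cliquesIn.1 hK).2
  obtain ⟨a, haA, haN⟩ : ∃ a ∈ A, a ∈ N := by
    by_contra! hAN
    have hle := card_le_card fun a ha => mem_sdiff.2 ⟨hAK ha, hAN a ha⟩
    have := card_sdiff_add_card_inter K N
    rw [inter_comm, hKd.card_eq] at this
    have := hinter N hN K hK
    omega
  obtain ⟨M, hM, hKM, haM⟩ := hswap a haA
  obtain ⟨-, hMd⟩ := mem_cliquesIn.1 hM
  have hcard : #(N ∩ K.erase a) < #(N ∩ M) := by
    rw [inter_erase, card_erase_of_mem (mem_inter.2 ⟨haN, hAK haA⟩)]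
    have := hinter N hN M hM
    have := card_pos.2 ⟨a, mem_inter.2 ⟨haN, hAK haA⟩⟩
    omega
  obtain ⟨x, hx, hxK⟩ := exists_mem_notMem_of_card_lt_card hcard
  obtain ⟨hxN, hxM⟩ := mem_inter.1 hx
  have hM_eq : insert x (K.erase a) = M := by
    refine eq_of_subset_of_card_le (insert_subset hxM hKM) ?_
    rw [card_insert_of_notMem fun h => hxK (mem_inter.2 ⟨hxN, h⟩), card_erase_of_mem (hAK haA),
      hKd.card_eq, hMd.card_eq]
    omega
  have hadj (q : α) (hq : q ∈ M) : G.Adj q a := by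
    rw [← hM_eq, mem_insert] at hq
    obtain rfl | hq := hq
    · exact (mem_cliquesIn.1 hN).2.isClique hxN haN fun h => haM (h ▸ hxM)
    · exact hKd.isClique (mem_of_mem_erase hq) (hAK haA) (ne_of_mem_erase hq)
  exact notMem_empty a (hlink M hM ▸ mem_link.2 ⟨(mem_cliquesIn.1 hN).1 haN, hadj⟩)

theorem exists_mem_sdiff_of_not_inter_subset {L M : Finset α} (hMK : #(K ∩ L) ≤ #(M ∩ K))
    (hM : ¬ K ∩ L ⊆ M) : ∃ a ∈ M, a ∈ K \ L := by
  have hlt : #(M ∩ (K ∩ L)) < #(M ∩ K) :=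
    (card_lt_card (inter_subset_right.ssubset_of_ne fun h => hM (inter_eq_right.1 h))).trans_le hMK
  obtain ⟨a, ha, ha'⟩ := exists_mem_notMem_of_card_lt_card hlt
  simp only [mem_inter, not_and] at ha ha'
  exact ⟨a, ha.1, mem_sdiff.2 ⟨ha.2, ha' ha.1 ha.2⟩⟩

theorem card_inter_sdiff_le_one {L M : Finset α} {p : α} (hKd : G.IsNClique d K)
    (hL : G.IsClique L) (hM : G.IsClique M)
    (hMK : d ≤ #(M ∩ K) + 2) (hKL : #(K ∩ L) + 2 = d) (hlink : link G X K = ∅)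
    (hpX : p ∈ X) (hpM : p ∈ M) (hp : p ∈ L \ K) : #((K ∩ L) \ M) ≤ 1 := by
  obtain ⟨hpL, hpK⟩ := mem_sdiff.1 hp
  -- Otherwise `p` would be adjacent to all of `K`.
  have hnot : ¬ K \ L ⊆ M := fun hsub => by
    refine notMem_empty p (hlink ▸ mem_link.2 ⟨hpX, fun q hq => ?_⟩)
    have hqp : q ≠ p := fun h => hpK (h ▸ hq)
    by_cases hqL : q ∈ L
    · exact hL hqL hpL hqp
    · exact hM (hsub (mem_sdiff.2 ⟨hq, hqL⟩)) hpM hqp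
  have hlt : #((K \ L) ∩ M) < #(K \ L) :=
    card_lt_card (inter_subset_left.ssubset_of_ne fun h => hnot (inter_eq_left.1 h))
  have hK_split := card_inter_add_card_sdiff K L
  have hMK_split := card_inter_add_card_sdiff (M ∩ K) L
  have hC_split := card_inter_add_card_sdiff (K ∩ L) M
  rw [hKd.card_eq] at hK_split
  rw [show M ∩ K ∩ L = K ∩ L ∩ M by grind, show (M ∩ K) \ L = (K \ L) ∩ M by grind] at hMK_split
  omega

theorem insert_insert_inter_mem_cliquesIn {L : Finset α} {a p : α} (hK : K ∈ cliquesIn G X d)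
    (hL : L ∈ cliquesIn G X d) (hKL : #(K ∩ L) + 2 = d) (ha : a ∈ K \ L) (hp : p ∈ L \ K)
    (hap : G.Adj a p) : insert a (insert p (K ∩ L)) ∈ cliquesIn G X d := by
  obtain ⟨hKX, hK⟩ := mem_cliquesIn.1 hK
  obtain ⟨hLX, hL⟩ := mem_cliquesIn.1 hL
  rw [mem_sdiff] at ha hp
  have hpKL : G.IsNClique (#(K ∩ L) + 1) (insert p (K ∩ L)) :=
    SimpleGraph.IsNClique.insert ⟨hK.isClique.subset (by simp), rfl⟩ fun q hq =>
      hL.isClique hp.1 (mem_inter.1 hq).2 fun h => hp.2 (h ▸ (mem_inter.1 hq).1)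
  refine mem_cliquesIn.2 ⟨by grind, hKL ▸ hpKL.insert fun q hq => ?_⟩
  obtain rfl | hq := mem_insert.1 hq
  · exact hap
  · exact hK.isClique ha.1 (mem_inter.1 hq).1 fun h => ha.2 (h ▸ (mem_inter.1 hq).2)

theorem exists_base_clique
    (hinter : ∀ K ∈ cliquesIn G X d, ∀ L ∈ cliquesIn G X d, d ≤ #(K ∩ L) + 2)
    (hlink : ∀ K ∈ cliquesIn G X d, link G X K = ∅) {K L M : Finset α}
    (hK : K ∈ cliquesIn G X d) (hL : L ∈ cliquesIn G X d) (hM : M ∈ cliquesIn G X d)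
    (hKL : #(K ∩ L) + 2 = d) (hnot : ¬ K ∩ L ⊆ M) :
    ∃ B ∈ cliquesIn G X d, ∀ N ∈ cliquesIn G X d, d ≤ #(N ∩ B) + 1 := by
  have hMK := hinter M hM K hK
  have hML := hinter M hM L hL
  obtain ⟨-, hKd⟩ := mem_cliquesIn.1 hK
  obtain ⟨-, hLd⟩ := mem_cliquesIn.1 hL
  obtain ⟨hMX, hMd⟩ := mem_cliquesIn.1 hM
  obtain ⟨a, haM, ha⟩ := exists_mem_sdiff_of_not_inter_subset (by omega) hnot
  obtain ⟨p, hpM, hp⟩ := exists_mem_sdiff_of_not_inter_subset (K := L) (L := K)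
    (by rw [inter_comm]; omega) (inter_comm K L ▸ hnot)
  obtain ⟨c, hcKL, hcM⟩ := not_subset.1 hnot
  have hdiff := card_inter_sdiff_le_one hKd hLd.isClique hMd.isClique hMK hKL (hlink K hK)
    (hMX hpM) hpM hp
  have hc_unique (q : α) (hq : q ∈ K ∩ L) (hqc : q ≠ c) : q ∈ M := by
    by_contra hqM
    exact hqc (card_le_one.1 hdiff q (mem_sdiff.2 ⟨hq, hqM⟩) c (mem_sdiff.2 ⟨hcKL, hcM⟩))
  have hB := insert_insert_inter_mem_cliquesIn hK hL hKL ha hp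
    (hMd.isClique haM hpM fun h => (mem_sdiff.1 hp).2 (h ▸ (mem_sdiff.1 ha).1))
  simp only [mem_sdiff, mem_inter] at ha hp hcKL hc_unique
  refine ⟨_, hB, le_card_inter_of_three_swaps hinter hlink hB (A := {a, p, c}) (by grind) ?_ ?_⟩
  · exact (card_eq_three.2 ⟨a, p, c, by grind, by grind, by grind, rfl⟩).ge
  · simp only [mem_insert, mem_singleton, forall_eq_or_imp, forall_eq]
    exact ⟨⟨L, hL, by grind, ha.2⟩, ⟨K, hK, by grind, hp.2⟩, ⟨M, hM, by grind, hcM⟩⟩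

theorem card_cliquesIn_le (hd : 3 ≤ d)
    (hinter : ∀ K ∈ cliquesIn G X d, ∀ L ∈ cliquesIn G X d, d ≤ #(K ∩ L) + 2)
    (hlink : ∀ K ∈ cliquesIn G X d, #(link G X K) ≤ 1)
    (hleaf : ∀ C : Finset α, G.IsClique C → #C + 2 = d → ∀ v ∈ link G X C, ∀ W ⊆ link G X C,
      #W = 3 → (∀ w ∈ W, G.Adj v w) → ∃ w ∈ W, ∀ u ∈ link G X C, G.Adj w u → u = v) :
    #(cliquesIn G X d) ≤ #X := by
  by_cases hlink₀ : ∃ K ∈ cliquesIn G X d, (link G X K).Nonempty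
  · obtain ⟨K, hK, hne⟩ := hlink₀
    exact card_cliquesIn_le_of_link_nonempty hd hinter hlink hK hne
  have hlink_empty : ∀ K ∈ cliquesIn G X d, link G X K = ∅ := by
    simpa [not_nonempty_iff_eq_empty] using hlink₀
  by_cases hbase : ∃ B ∈ cliquesIn G X d, ∀ N ∈ cliquesIn G X d, d ≤ #(N ∩ B) + 1
  · obtain ⟨B, hB, hbase⟩ := hbase
    exact card_cliquesIn_le_of_base_clique hB (hlink_empty B hB) hbase (by omega)
  obtain hF | ⟨K, hK⟩ := (cliquesIn G X d).eq_empty_or_nonempty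
  · simp [hF]
  obtain ⟨L, hL, hLK⟩ : ∃ L ∈ cliquesIn G X d, #(L ∩ K) + 1 < d := by
    by_contra! h
    exact hbase ⟨K, hK, h⟩
  have hcard : #(L ∩ K) + 2 = d := by
    have := hinter L hL K hK
    omega
  refine card_cliquesIn_le_of_forall_subset hcard (fun M hM => ?_) (hleaf _ ?_ hcard)
  · by_contra hLKM
    exact hbase (exists_base_clique hinter hlink_empty hL hK hM hcard hLKM)
  · exact (mem_cliquesIn.1 hK).2.isClique.subset (by simp)

end Cliques

theorem le_card_inter_add_two_of_mem_cliquesIn {E : Type*} [NormedAddCommGroup E]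
    [InnerProductSpace ℝ E] [FiniteDimensional ℝ E] {d : ℕ} (hE : Module.finrank ℝ E ≤ d)
    (hd : 4 ≤ d) {X K L : Finset E} (hdiam : ∀ x ∈ X, ∀ y ∈ X, ‖x - y‖ ≤ 1)
    (hK : K ∈ cliquesIn (unitDistGraph E) X d) (hL : L ∈ cliquesIn (unitDistGraph E) X d)
    (hKL : d - 3 ≤ #(K ∩ L)) : d ≤ #(K ∩ L) + 2 := by
  obtain ⟨hKX, hK⟩ := mem_cliquesIn.1 hK
  obtain ⟨hLX, hL⟩ := mem_cliquesIn.1 hL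
  by_contra! hlt
  have hK_split := card_sdiff_add_card_inter K L
  have hL_split := card_sdiff_add_card_inter L K
  have hunion := card_union_add_card_inter K L
  rw [inter_comm] at hL_split
  rw [hK.card_eq] at hK_split hunion
  rw [hL.card_eq] at hL_split hunion
  have := card_union_le_finrank_add_two hK.isClique hL.isClique (card_pos.1 (by omega))
    (fun a ha b hb => hdiam a (hKX ha) b (hLX hb)) (by omega) (by omega)
  omega

theorem mem_cliquesIn_unitDistGraph {E : Type*} [NormedAddCommGroup E] {X K : Finset E} {d : ℕ} :
    K ∈ cliquesIn (unitDistGraph E) X d ↔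
      K ⊆ X ∧ #K = d ∧ ∀ x ∈ K, ∀ y ∈ K, x ≠ y → ‖x - y‖ = 1 := by
  rw [mem_cliquesIn, SimpleGraph.isNClique_iff, and_comm (b := #K = d)]
  rfl

theorem schur_under_intersection_hypothesis_general {E : Type*} [NormedAddCommGroup E]
    [InnerProductSpace ℝ E] [FiniteDimensional ℝ E] {d : ℕ} (hE : Module.finrank ℝ E ≤ d)
    (hd : 4 ≤ d) {X : Finset E} (hdiam : ∀ x ∈ X, ∀ y ∈ X, ‖x - y‖ ≤ 1)
    (hshare : ∀ K ∈ cliquesIn (unitDistGraph E) X d, ∀ L ∈ cliquesIn (unitDistGraph E) X d,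
      d - 3 ≤ #(K ∩ L)) :
    #(cliquesIn (unitDistGraph E) X d) ≤ #X := by
  refine card_cliquesIn_le (by omega) (fun K hK L hL => ?_) (fun K hK => ?_)
    fun C hC hCd v hv W hW hW₃ hvW => ?_
  · exact le_card_inter_add_two_of_mem_cliquesIn hE hd hdiam hK hL (hshare K hK L hL)
  · have hKd := (mem_cliquesIn.1 hK).2
    refine card_le_one.2 fun v hv v' hv' => ?_
    obtain ⟨hvX, hvK⟩ := mem_link.1 hv
    obtain ⟨hvX', hvK'⟩ := mem_link.1 hv'
    exact eq_of_forall_adj_clique hKd.isClique (hE.trans hKd.card_eq.ge) hvK hvK'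
      (hdiam v hvX v' hvX')
  · obtain ⟨-, hvC⟩ := mem_link.1 hv
    have hvC' : v ∉ C := fun h => (unitDistGraph E).irrefl (hvC v h)
    have hWlink (w : E) (hw : w ∈ W) := mem_link.1 (hW hw)
    obtain ⟨w, hw, hunique⟩ := exists_forall_eq_of_forall_adj (C := insert v C) (W := W)
      (by simpa using hC.insert fun q hq _ => (hvC q hq).symm) (mem_insert_self v C)
      (by simpa using ⟨hvW, fun q hq w hw => (hWlink w hw).2 q hq⟩) (card_pos.1 (by omega))
      hW₃.le (by rw [card_insert_of_notMem hvC']; omega)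
    rw [erase_insert hvC'] at hunique
    refine ⟨w, hw, fun u hu hwu => ?_⟩
    obtain ⟨huX, huC⟩ := mem_link.1 hu
    exact hunique u huC hwu fun w' hw' => hdiam w' (hWlink w' hw').1 u huX

theorem schur_under_intersection_hypothesis (d : ℕ) (hd : d ≥ 4)
    (X : Finset (EuclideanSpace ℝ (Fin d))) (n : ℕ) (hn : X.card = n)
    (hdiam : ∀ x ∈ X, ∀ y ∈ X, ‖x - y‖ ≤ 1)
    (hshare : ∀ K₁ K₂ : Finset (EuclideanSpace ℝ (Fin d)),
      K₁ ⊆ X → K₂ ⊆ X → K₁.card = d → K₂.card = d →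
      (∀ x ∈ K₁, ∀ y ∈ K₁, x ≠ y → ‖x - y‖ = 1) →
      (∀ x ∈ K₂, ∀ y ∈ K₂, x ≠ y → ‖x - y‖ = 1) →
      d - 3 ≤ (K₁ ∩ K₂).card) :
    ((X.powersetCard d).filter
      (fun s => ∀ x ∈ s, ∀ y ∈ s, x ≠ y → ‖x - y‖ = 1)).card ≤ n := by
  have hcliques : ((X.powersetCard d).filter fun s => ∀ x ∈ s, ∀ y ∈ s, x ≠ y → ‖x - y‖ = 1) =
      cliquesIn (unitDistGraph (EuclideanSpace ℝ (Fin d))) X d := by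
    ext s
    rw [mem_cliquesIn_unitDistGraph, mem_filter, mem_powersetCard, and_assoc]
  rw [hcliques, ← hn]
  refine schur_under_intersection_hypothesis_general (by simp) hd hdiam fun K hK L hL => ?_
  obtain ⟨hKX, hKd, hK⟩ := mem_cliquesIn_unitDistGraph.1 hK
  obtain ⟨hLX, hLd, hL⟩ := mem_cliquesIn_unitDistGraph.1 hL
  convert hshare K L hKX hLX hKd hLd hK hL
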